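/- Let X ⊆ ℝⁿ be a nonempty compact convex set and f : ℝⁿ → ℝ twice continuously differentiable with μ·I ⪯ ∇²f(x) ⪯ L·I for all x ∈ X (0 < μ ≤ L) and with L₂-Lipschitz Hessian on X, with unique minimizer x* over X. Fix x_k ∈ X, a symmetric positive definite H_k, and set η_k := max{λ_max(H_k⁻¹∇²f(x_k)), λ_max((∇²f(x_k))⁻¹H_k)}. Let x̃*_{k+1} := argmin_{x∈X} ( f(x_k) + ⟨∇f(x_k), x − x_k⟩ + ½‖x − x_k‖²_{H_k} ). Then ‖x̃*_{k+1} − x*‖² ≤ (η_k²L₂²/(4μ²))·‖x_k − x*‖⁴ + (2Lη_k(η_k − 1)/μ)·‖x_k − x*‖². -/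

import Mathlib

/-!
Write `e = x_k − x*`, `d = x̃*_{k+1} − x*`, `G = ∇²f(x_k)`, `H = H_k` and
`D = ∇f(x_k) − ∇f(x*)`. Adding the first-order optimality conditions of `x*` for `f` and of
`x̃*_{k+1}` for the quadratic model gives `‖d‖²_H ≤ ⟪He − D, d⟫`, hence
`‖d‖²_H ≤ ‖He − D‖²_{H⁻¹} = ‖e‖²_H − 2⟪e, D⟫ + ‖D‖²_{H⁻¹}`. By definition of `η`,
`G ⪯ ηH` and `H ⪯ ηG` (`posSemidef_lamMax_smul_sub`), so the right side is at most
`η‖Ge − D‖²_{G⁻¹} + 2(η − 1)⟪e, D⟫`. The Lipschitz Hessian gives `‖Ge − D‖ ≤ (L₂/2)‖e‖²`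
(`norm_taylor_le`), the upper Hessian bound gives `⟪e, D⟫ ≤ L‖e‖²` (`inner_image_sub_le`), and
`‖d‖²_H ≥ (μ/η)‖d‖²`. These are combined in `norm_sq_le_of_scaled_operators`.
-/

open Matrix
open scoped RealInnerProductSpace

/-- The largest (real) eigenvalue of a matrix, as the supremum of its real spectrum. -/
noncomputable def lamMax {n : ℕ} (M : Matrix (Fin n) (Fin n) ℝ) : ℝ :=
  sSup (spectrum ℝ M)

/-- The smallest (real) eigenvalue of a matrix, as the infimum of its real spectrum. -/
noncomputable def lamMin {n : ℕ} (M : Matrix (Fin n) (Fin n) ℝ) : ℝ :=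
  sInf (spectrum ℝ M)

/-- Action of a matrix on a vector of Euclidean space. -/
noncomputable def mApply {n : ℕ} (H : Matrix (Fin n) (Fin n) ℝ)
    (v : EuclideanSpace ℝ (Fin n)) : EuclideanSpace ℝ (Fin n) :=
  Matrix.toEuclideanCLM (𝕜 := ℝ) H v

/-- The squared matrix "norm" ‖v‖²_H := vᵀ H v. -/
noncomputable def qForm {n : ℕ} (H : Matrix (Fin n) (Fin n) ℝ)
    (v : EuclideanSpace ℝ (Fin n)) : ℝ :=
  ⟪v, mApply H v⟫

/-- Spectral (ℓ² operator) norm of a matrix. -/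
noncomputable def mNorm {n : ℕ} (H : Matrix (Fin n) (Fin n) ℝ) : ℝ :=
  ‖Matrix.toEuclideanCLM (𝕜 := ℝ) H‖

/-- The generalized Rayleigh quotient bound: `G ⪯ λ_max(H⁻¹G) H`. With `H = BᴴB`, the matrix `H⁻¹G`
is similar to the Hermitian matrix `K = B⁻ᴴGB⁻¹`, for which `K ⪯ λ_max(K) I`; conjugating by `B`
gives the claim. -/
lemma posSemidef_lamMax_smul_sub {n : ℕ} {H G : Matrix (Fin n) (Fin n) ℝ}
    (hH : H.PosDef) (hG : G.IsHermitian) :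
    (lamMax (H⁻¹ * G) • H - G).PosSemidef := by
  obtain ⟨B, hB, rfl⟩ : ∃ B : Matrix (Fin n) (Fin n) ℝ, IsUnit B ∧ H = Bᴴ * B := by
    open scoped MatrixOrder Matrix.Norms.L2Operator in
    exact CStarAlgebra.isStrictlyPositive_iff_eq_star_mul_self.mp hH.isStrictlyPositive
  have hdet : IsUnit B.det := (Matrix.isUnit_iff_isUnit_det B).1 hB
  have hdet' : IsUnit Bᴴ.det := by simpa [Matrix.det_conjTranspose] using hdet
  have hspec : spectrum ℝ ((B⁻¹)ᴴ * G * B⁻¹) = spectrum ℝ ((Bᴴ * B)⁻¹ * G) := by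
    obtain ⟨u, rfl⟩ := hB
    rw [← spectrum.units_conjugate (a := ((u : Matrix (Fin n) (Fin n) ℝ)ᴴ * u)⁻¹ * G) (u := u)]
    congr 1
    rw [Matrix.mul_inv_rev, Matrix.conjTranspose_nonsing_inv, Matrix.coe_units_inv]
    simp only [← mul_assoc]
    rw [Matrix.mul_nonsing_inv _ hdet, one_mul]
  set lam := lamMax ((Bᴴ * B)⁻¹ * G) with hlam
  have hK : (algebraMap ℝ (Matrix (Fin n) (Fin n) ℝ) lam - (B⁻¹)ᴴ * G * B⁻¹).PosSemidef := by
    rw [Matrix.posSemidef_iff_isHermitian_and_spectrum_nonneg]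
    constructor
    · refine Matrix.IsHermitian.sub ?_ (Matrix.isHermitian_conjTranspose_mul_mul _ hG)
      rw [Algebra.algebraMap_eq_smul_one, Matrix.IsHermitian, Matrix.conjTranspose_smul]
      simp
    · rw [← spectrum.singleton_sub_eq, hspec]
      rintro _ ⟨a, rfl, b, hb, rfl⟩
      exact sub_nonneg.2 (le_csSup Matrix.finite_real_spectrum.bddAbove hb)
  have h := hK.conjTranspose_mul_mul_same B
  convert h using 1
  have h1 : Bᴴ * ((B⁻¹)ᴴ * G * B⁻¹) * B = G := by
    rw [Matrix.conjTranspose_nonsing_inv]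
    simp only [← mul_assoc]
    rw [Matrix.mul_nonsing_inv _ hdet', one_mul, mul_assoc, Matrix.nonsing_inv_mul _ hdet, mul_one]
  rw [mul_sub, sub_mul, h1, Algebra.algebraMap_eq_smul_one]
  simp

lemma inner_toEuclideanCLM_nonneg {n : ℕ} {M : Matrix (Fin n) (Fin n) ℝ} (hM : M.PosSemidef)
    (x : EuclideanSpace ℝ (Fin n)) : 0 ≤ ⟪x, Matrix.toEuclideanCLM (𝕜 := ℝ) M x⟫ := by
  rw [Matrix.inner_toEuclideanCLM]
  simpa using hM.dotProduct_mulVec_nonneg x.ofLp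

lemma inner_toEuclideanCLM_symm {n : ℕ} {M : Matrix (Fin n) (Fin n) ℝ} (hM : M.IsHermitian)
    (x y : EuclideanSpace ℝ (Fin n)) :
    ⟪Matrix.toEuclideanCLM (𝕜 := ℝ) M x, y⟫ = ⟪x, Matrix.toEuclideanCLM (𝕜 := ℝ) M y⟫ := by
  have h : star (Matrix.toEuclideanCLM (𝕜 := ℝ) M) = Matrix.toEuclideanCLM (𝕜 := ℝ) M := by
    rw [← map_star]; exact congrArg _ hM
  rw [← ContinuousLinearMap.adjoint_inner_left, ← ContinuousLinearMap.star_eq_adjoint, h]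

/-- A positive definite matrix acts surjectively. -/
lemma exists_toEuclideanCLM_eq {n : ℕ} {M : Matrix (Fin n) (Fin n) ℝ} (hM : M.PosDef)
    (y : EuclideanSpace ℝ (Fin n)) : ∃ x, Matrix.toEuclideanCLM (𝕜 := ℝ) M x = y := by
  refine ⟨Matrix.toEuclideanCLM (𝕜 := ℝ) M⁻¹ y, ?_⟩
  change (Matrix.toEuclideanCLM (𝕜 := ℝ) M * Matrix.toEuclideanCLM (𝕜 := ℝ) M⁻¹) y = y
  rw [← map_mul,
    Matrix.mul_nonsing_inv _ ((Matrix.isUnit_iff_isUnit_det M).1 hM.isUnit), map_one]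
  rfl

/-- The estimate in abstract form, with `e = x_k − x*`, `d = x̃*_{k+1} − x*`, `D` the difference of
the gradients, `v = G⁻¹D` and `w = H⁻¹D`. It rests on
`‖d‖²_H ≤ ‖e − w‖²_H ≤ η‖e − v‖²_G + 2(η − 1)⟪e, D⟫`. -/
lemma norm_sq_le_of_scaled_operators {E : Type*} [NormedAddCommGroup E] [InnerProductSpace ℝ E]
    {H G : E →L[ℝ] E} (hHs : ∀ x y, ⟪H x, y⟫ = ⟪x, H y⟫) (hGs : ∀ x y, ⟪G x, y⟫ = ⟪x, G y⟫)
    {μ L L₂ η : ℝ} (hμ : 0 < μ) (hη : 1 ≤ η)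
    (hGμ : ∀ x, μ * ‖x‖ ^ 2 ≤ ⟪x, G x⟫)
    (hHG : ∀ x, ⟪x, H x⟫ ≤ η * ⟪x, G x⟫) (hGH : ∀ x, ⟪x, G x⟫ ≤ η * ⟪x, H x⟫)
    {e d D v w : E} (hv : G v = D) (hw : H w = D)
    (hopt : ⟪d, H d⟫ ≤ ⟪H e - D, d⟫)
    (hr : ‖G e - D‖ ≤ L₂ / 2 * ‖e‖ ^ 2) (hD : ⟪e, D⟫ ≤ L * ‖e‖ ^ 2) :
    ‖d‖ ^ 2 ≤ η ^ 2 * L₂ ^ 2 / (4 * μ ^ 2) * ‖e‖ ^ 4 + 2 * L * η * (η - 1) / μ * ‖e‖ ^ 2 := by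
  have hη0 : 0 < η := by linarith
  have hG0 : ∀ x, 0 ≤ ⟪x, G x⟫ := fun x => le_trans (by positivity) (hGμ x)
  have hH0 : ∀ x, 0 ≤ ⟪x, H x⟫ := fun x =>
    nonneg_of_mul_nonneg_right ((hG0 x).trans (hGH x)) hη0
  have h1 : ⟪d, H d⟫ ≤ ⟪e - w, H (e - w)⟫ := by
    have h := hH0 (e - w - d)
    have h2 : ⟪H e - D, d⟫ = ⟪e - w, H d⟫ := by rw [← hw, ← map_sub, hHs]
    have h3 : ⟪d, H (e - w)⟫ = ⟪e - w, H d⟫ := by rw [← hHs, real_inner_comm]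
    rw [map_sub H (e - w) d, inner_sub_left, inner_sub_right, inner_sub_right, h3] at h
    linarith
  have h2 : ⟪e - w, H (e - w)⟫ = ⟪e, H e⟫ - 2 * ⟪e, D⟫ + ⟪w, D⟫ := by
    have h3 : ⟪w, H e⟫ = ⟪e, D⟫ := by rw [← hHs, hw, real_inner_comm]
    rw [map_sub, inner_sub_left, inner_sub_right, inner_sub_right, h3, hw]; ring
  -- Young's inequality in the `G`-norm, applied to `w` and `η • v`, gives `H⁻¹ ⪯ η G⁻¹` on `D`.
  have h3 : ⟪w, D⟫ ≤ η * ⟪v, D⟫ := by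
    have h := hG0 (w - η • v)
    have h4 : ⟪v, G w⟫ = ⟪w, D⟫ := by rw [← hGs, hv, real_inner_comm]
    have h5 := hGH w
    rw [hw] at h5
    simp only [map_sub, map_smul, inner_sub_left, inner_sub_right, inner_smul_left,
      inner_smul_right, h4, hv, conj_trivial] at h
    have : 0 ≤ η * (η * ⟪v, D⟫ - ⟪w, D⟫) := by nlinarith
    linarith [nonneg_of_mul_nonneg_right this hη0]
  have h4 : ⟪e - v, G (e - v)⟫ = ⟪e, G e⟫ - 2 * ⟪e, D⟫ + ⟪v, D⟫ := by
    have h3 : ⟪v, G e⟫ = ⟪e, D⟫ := by rw [← hGs, hv, real_inner_comm]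
    rw [map_sub, inner_sub_left, inner_sub_right, inner_sub_right, h3, hv]; ring
  -- Since `G(e - v) = Ge - D` and `μI ⪯ G`.
  have h5 : μ * ⟪e - v, G (e - v)⟫ ≤ ‖G e - D‖ ^ 2 := by
    have ha := hGμ (e - v)
    have hb : ⟪e - v, G (e - v)⟫ ≤ ‖e - v‖ * ‖G e - D‖ := by
      rw [map_sub, hv]; exact real_inner_le_norm _ _
    nlinarith [sq_nonneg (μ * ‖e - v‖ - ‖G e - D‖)]
  have h6 : ‖G e - D‖ ^ 2 ≤ (L₂ / 2 * ‖e‖ ^ 2) ^ 2 := by gcongr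
  have h7 : μ * ‖d‖ ^ 2 ≤ η * (η * ⟪e - v, G (e - v)⟫ + 2 * (η - 1) * (L * ‖e‖ ^ 2)) := by
    refine (hGμ d).trans ((hGH d).trans (mul_le_mul_of_nonneg_left ?_ hη0.le))
    have := mul_le_mul_of_nonneg_left hD (by linarith : 0 ≤ 2 * (η - 1))
    have h8 : η * ⟪e - v, G (e - v)⟫ = η * ⟪e, G e⟫ - 2 * (η * ⟪e, D⟫) + η * ⟪v, D⟫ := by
      rw [h4]; ring
    linarith [hHG e]
  have h8 : μ ^ 2 * ‖d‖ ^ 2 ≤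
      η ^ 2 * (L₂ / 2 * ‖e‖ ^ 2) ^ 2 + μ * (2 * η * (η - 1) * (L * ‖e‖ ^ 2)) := by
    have := mul_le_mul_of_nonneg_left h7 hμ.le
    have := mul_le_mul_of_nonneg_left (h5.trans h6) (sq_nonneg η)
    linarith
  have h9 : η ^ 2 * L₂ ^ 2 / (4 * μ ^ 2) * ‖e‖ ^ 4 + 2 * L * η * (η - 1) / μ * ‖e‖ ^ 2 =
      (η ^ 2 * (L₂ / 2 * ‖e‖ ^ 2) ^ 2 + μ * (2 * η * (η - 1) * (L * ‖e‖ ^ 2))) / μ ^ 2 := by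
    field_simp
    ring
  rw [h9, le_div_iff₀ (by positivity)]
  linarith

/-- Second-order Taylor bound for a map `g` whose derivative `A` is Lipschitz along the segment
from `y` to `x`. -/
lemma norm_taylor_le {E : Type*} [NormedAddCommGroup E] [NormedSpace ℝ E]
    {g : E → E} {A : E → E →L[ℝ] E} (hA : ∀ x, HasFDerivAt g (A x) x) {X : Set E}
    (hX : Convex ℝ X) {C : ℝ} (hLip : ∀ x ∈ X, ∀ y ∈ X, ‖A x - A y‖ ≤ C * ‖x - y‖)
    {x y : E} (hx : x ∈ X) (hy : y ∈ X) :
    ‖A x (x - y) - (g x - g y)‖ ≤ C / 2 * ‖x - y‖ ^ 2 := by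
  set e := x - y with he
  have hder : ∀ t : ℝ, HasDerivAt (fun t : ℝ => t • A x e - (g x - g (x - t • e)))
      (A x e - A (x - t • e) e) t := by
    intro t
    have hl : HasDerivAt (fun t : ℝ => x - t • e) (-e) t := by
      simpa using ((hasDerivAt_id t).smul_const e).const_sub x
    have h1 := (hA (x - t • e)).comp_hasDerivAt t hl
    have h2 : HasDerivAt (fun t : ℝ => t • A x e - (g x - g (x - t • e)))
        ((1 : ℝ) • A x e - -(A (x - t • e) (-e))) t :=
      ((hasDerivAt_id t).smul_const (A x e)).sub (h1.const_sub (g x))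
    simpa only [one_smul, map_neg, neg_neg] using h2
  have hseg : ∀ t ∈ Set.Icc (0 : ℝ) 1, x - t • e ∈ X := by
    intro t ht
    have := hX hx hy (sub_nonneg.2 ht.2) ht.1 (by ring)
    convert this using 1
    rw [he]; module
  have hB : ∀ t : ℝ, HasDerivAt (fun t : ℝ => C / 2 * ‖e‖ ^ 2 * t ^ 2) (C * t * ‖e‖ ^ 2) t := by
    intro t
    refine ((hasDerivAt_pow 2 t).const_mul (C / 2 * ‖e‖ ^ 2)).congr_deriv ?_
    norm_num
    ring
  have key := image_norm_le_of_norm_deriv_right_le_deriv_boundary (a := 0) (b := 1)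
    (fun t _ => (hder t).continuousAt.continuousWithinAt)
    (fun t _ => (hder t).hasDerivWithinAt)
    (B := fun t => C / 2 * ‖e‖ ^ 2 * t ^ 2) (B' := fun t => C * t * ‖e‖ ^ 2)
    (by simp) hB
    (fun t ht => by
      have h1 := (A x - A (x - t • e)).le_opNorm e
      have h2 := hLip x hx _ (hseg t ⟨ht.1, ht.2.le⟩)
      have h3 : ‖x - (x - t • e)‖ = t * ‖e‖ := by
        rw [sub_sub_cancel, norm_smul, Real.norm_of_nonneg ht.1]
      rw [h3] at h2
      rw [_root_.sub_apply] at h1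
      have h4 := mul_le_mul_of_nonneg_right h2 (norm_nonneg e)
      linarith) (Set.right_mem_Icc.2 zero_le_one)
  simpa [he] using key

/-- An upper bound `A ⪯ L I` on the derivative of `g` over a convex set makes `g` one-sided
`L`-Lipschitz there. -/
lemma inner_image_sub_le {E : Type*} [NormedAddCommGroup E] [InnerProductSpace ℝ E]
    {g : E → E} {A : E → E →L[ℝ] E} (hA : ∀ x, HasFDerivAt g (A x) x) {X : Set E}
    (hX : Convex ℝ X) {L : ℝ} (hL : ∀ x ∈ X, ∀ z, ⟪z, A x z⟫ ≤ L * ‖z‖ ^ 2)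
    {x y : E} (hx : x ∈ X) (hy : y ∈ X) :
    ⟪x - y, g x - g y⟫ ≤ L * ‖x - y‖ ^ 2 := by
  set e := x - y with he
  have hder : ∀ t : ℝ, HasDerivAt (fun t : ℝ => ⟪e, g (y + t • e)⟫)
      ⟪e, A (y + t • e) e⟫ t := by
    intro t
    have hl : HasDerivAt (fun t : ℝ => y + t • e) e t := by
      simpa using ((hasDerivAt_id t).smul_const e).const_add y
    have h1 := (hA (y + t • e)).comp_hasDerivAt t hl
    simpa using (hasDerivAt_const t e).inner ℝ h1
  have hseg : ∀ t ∈ Set.Icc (0 : ℝ) 1, y + t • e ∈ X := by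
    intro t ht
    have := hX hx hy ht.1 (sub_nonneg.2 ht.2) (by ring)
    convert this using 1
    rw [he]; module
  have key := (convex_Icc (0 : ℝ) 1).image_sub_le_mul_sub_of_deriv_le
    (fun t _ => (hder t).continuousAt.continuousWithinAt)
    (fun t _ => (hder t).differentiableAt.differentiableWithinAt)
    (C := L * ‖e‖ ^ 2)
    (fun t ht => by
      rw [(hder t).deriv]
      exact hL _ (hseg t (interior_subset ht)) e)
    0 (by simp) 1 (by simp) zero_le_one
  simpa [he, inner_sub_right] using key

/-- First-order optimality for the quadratic model `z ↦ c + ⟪g, z - p⟫ + ½⟪z - p, H (z - p)⟫`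
minimized over a convex set. -/
lemma quadratic_first_order {E : Type*} [NormedAddCommGroup E] [InnerProductSpace ℝ E]
    {H : E →L[ℝ] E} (hHs : ∀ x y, ⟪H x, y⟫ = ⟪x, H y⟫) {X : Set E} (hX : Convex ℝ X)
    {q : E → ℝ} {c : ℝ} {g p : E}
    (hq : ∀ z, q z = c + ⟪g, z - p⟫ + (1 / 2) * ⟪z - p, H (z - p)⟫)
    {a y : E} (ha : a ∈ X) (hmin : ∀ z ∈ X, q a ≤ q z) (hy : y ∈ X) :
    0 ≤ ⟪g + H (a - p), y - a⟫ := by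
  have hder : HasFDerivAt q (innerSL ℝ (g + H (a - p))) a := by
    have h0 : HasFDerivAt (fun z : E => z - p) (ContinuousLinearMap.id ℝ E) a :=
      (hasFDerivAt_id a).sub_const p
    have h1 := (hasFDerivAt_const g a).inner ℝ h0
    have h2 := h0.inner ℝ (H.hasFDerivAt.comp a h0)
    have h3 := ((h1.const_add c).add (h2.const_mul (1 / 2)))
    have hq' : q = fun z => c + ⟪g, z - p⟫ + (1 / 2) * ⟪z - p, H (z - p)⟫ := funext hq
    rw [hq']
    refine h3.congr_fderiv ?_
    ext z
    have h4 : ⟪z, H (a - p)⟫ = ⟪a - p, H z⟫ := by rw [← hHs, real_inner_comm]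
    simp [fderivInnerCLM_apply, -map_sub]
    rw [hHs, h4]
    ring
  have hm : IsMinOn q X a := fun z hz => hmin z hz
  simpa [inner_add_left, -map_sub] using hm.localize.hasFDerivWithinAt_nonneg hder.hasFDerivWithinAt
    (sub_mem_posTangentConeAt_of_segment_subset (hX.segment_subset ha hy))

/-- local convergence of the exact PVM step: with `μ·I ⪯ ∇²f ⪯ L·I` on `X`,
an `L₂`-Lipschitz Hessian on `X`, and `x̃*_{k+1}` the minimizer of the quadratic model
over `X`, one has
`‖x̃*_{k+1} − x*‖² ≤ (η_k²L₂²/(4μ²))‖x_k − x*‖⁴ + (2Lη_k(η_k − 1)/μ)‖x_k − x*‖²`. -/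
theorem socgs_pvm_local_linear_quadratic {n : ℕ}
    (X : Set (EuclideanSpace ℝ (Fin n)))
    (hne : X.Nonempty) (hcomp : IsCompact X) (hconv : Convex ℝ X)
    (f : EuclideanSpace ℝ (Fin n) → ℝ) (hf : ContDiff ℝ 2 f)
    (Hess : EuclideanSpace ℝ (Fin n) → Matrix (Fin n) (Fin n) ℝ)
    (hHess : ∀ x, HasFDerivAt (gradient f) (Matrix.toEuclideanCLM (𝕜 := ℝ) (Hess x)) x)
    (μ L : ℝ) (hμ : 0 < μ) (hμL : μ ≤ L)
    (hbound : ∀ x ∈ X, (Hess x - μ • (1 : Matrix (Fin n) (Fin n) ℝ)).PosSemidef ∧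
      (L • (1 : Matrix (Fin n) (Fin n) ℝ) - Hess x).PosSemidef)
    (L₂ : ℝ) (hL₂ : 0 < L₂)
    (hLip : ∀ x ∈ X, ∀ y ∈ X, mNorm (Hess x - Hess y) ≤ L₂ * ‖x - y‖)
    (xstar : EuclideanSpace ℝ (Fin n)) (hxstar : xstar ∈ X)
    (hminstar : ∀ y ∈ X, f xstar ≤ f y)
    (huniq : ∀ z ∈ X, (∀ y ∈ X, f z ≤ f y) → z = xstar)
    (xk : EuclideanSpace ℝ (Fin n)) (hxk : xk ∈ X)
    (Hk : Matrix (Fin n) (Fin n) ℝ) (hHk : Hk.PosDef)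
    (ηk : ℝ) (hηk : ηk = max (lamMax (Hk⁻¹ * Hess xk)) (lamMax ((Hess xk)⁻¹ * Hk)))
    (fhat : EuclideanSpace ℝ (Fin n) → ℝ)
    (hfhat : ∀ x, fhat x =
      f xk + ⟪gradient f xk, x - xk⟫ + (1 / 2) * qForm Hk (x - xk))
    (xt : EuclideanSpace ℝ (Fin n)) (hxtX : xt ∈ X)
    (hxtmin : ∀ w ∈ X, fhat xt ≤ fhat w) :
    ‖xt - xstar‖ ^ 2 ≤ ηk ^ 2 * L₂ ^ 2 / (4 * μ ^ 2) * ‖xk - xstar‖ ^ 4 +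
      2 * L * ηk * (ηk - 1) / μ * ‖xk - xstar‖ ^ 2 := by
  have hHks : Hk.IsHermitian := hHk.isHermitian
  have hSmul : ∀ (c : ℝ) (M : Matrix (Fin n) (Fin n) ℝ) (x : EuclideanSpace ℝ (Fin n)),
      ⟪x, Matrix.toEuclideanCLM (𝕜 := ℝ) (c • M) x⟫ =
        c * ⟪x, Matrix.toEuclideanCLM (𝕜 := ℝ) M x⟫ := fun c M x => by
    rw [map_smul, _root_.smul_apply, inner_smul_right]
  have hle : ∀ {M N : Matrix (Fin n) (Fin n) ℝ}, (N - M).PosSemidef →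
      ∀ x, ⟪x, Matrix.toEuclideanCLM (𝕜 := ℝ) M x⟫ ≤
        ⟪x, Matrix.toEuclideanCLM (𝕜 := ℝ) N x⟫ := fun h x => by
    have := inner_toEuclideanCLM_nonneg h x
    rw [map_sub, _root_.sub_apply, inner_sub_right] at this
    linarith
  have hone : ∀ (c : ℝ) (x : EuclideanSpace ℝ (Fin n)),
      ⟪x, Matrix.toEuclideanCLM (𝕜 := ℝ) (c • (1 : Matrix (Fin n) (Fin n) ℝ)) x⟫ =
        c * ‖x‖ ^ 2 := fun c x => by
    rw [hSmul, map_one, one_apply_eq_self, real_inner_self_eq_norm_sq]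
  have hGμ : ∀ x, μ * ‖x‖ ^ 2 ≤ ⟪x, Matrix.toEuclideanCLM (𝕜 := ℝ) (Hess xk) x⟫ := fun x => by
    rw [← hone]; exact hle (hbound xk hxk).1 x
  have hGpd : (Hess xk).PosDef := by
    have h := (Matrix.PosDef.one (n := Fin n) (R := ℝ)).smul hμ
    simpa using h.add_posSemidef (hbound xk hxk).1
  have hGs : (Hess xk).IsHermitian := hGpd.isHermitian
  have hGH : ∀ x, ⟪x, Matrix.toEuclideanCLM (𝕜 := ℝ) (Hess xk) x⟫ ≤
      ηk * ⟪x, Matrix.toEuclideanCLM (𝕜 := ℝ) Hk x⟫ := fun x => by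
    have h := hle (posSemidef_lamMax_smul_sub hHk hGs) x
    rw [hSmul] at h
    refine h.trans (mul_le_mul_of_nonneg_right ?_ (inner_toEuclideanCLM_nonneg hHk.posSemidef x))
    rw [hηk]; exact le_max_left _ _
  have hHG : ∀ x, ⟪x, Matrix.toEuclideanCLM (𝕜 := ℝ) Hk x⟫ ≤
      ηk * ⟪x, Matrix.toEuclideanCLM (𝕜 := ℝ) (Hess xk) x⟫ := fun x => by
    have h := hle (posSemidef_lamMax_smul_sub hGpd hHks) x
    rw [hSmul] at h
    refine h.trans (mul_le_mul_of_nonneg_right ?_ (inner_toEuclideanCLM_nonneg hGpd.posSemidef x))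
    rw [hηk]; exact le_max_right _ _
  -- In dimension zero the spectra are empty and `ηk` is the junk value `0`.
  rcases subsingleton_or_nontrivial (EuclideanSpace ℝ (Fin n)) with hsub | hnt
  · rw [Subsingleton.elim xt xstar, Subsingleton.elim xk xstar]
    simp
  have hη : 1 ≤ ηk := by
    obtain ⟨x, hx⟩ := exists_ne (0 : EuclideanSpace ℝ (Fin n))
    have hG0 : 0 < ⟪x, Matrix.toEuclideanCLM (𝕜 := ℝ) (Hess xk) x⟫ :=
      lt_of_lt_of_le (mul_pos hμ (pow_pos (norm_pos_iff.2 hx) 2)) (hGμ x)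
    have hη0 : 0 < ηk := pos_of_mul_pos_left (hG0.trans_le (hGH x))
      (inner_toEuclideanCLM_nonneg hHk.posSemidef x)
    have h := (hGH x).trans (mul_le_mul_of_nonneg_left (hHG x) hη0.le)
    by_contra! hlt
    nlinarith [mul_lt_mul_of_pos_right (mul_lt_one_of_nonneg_of_lt_one_left hη0.le hlt hlt.le) hG0]
  obtain ⟨v, hv⟩ := exists_toEuclideanCLM_eq hGpd (gradient f xk - gradient f xstar)
  obtain ⟨w, hw⟩ := exists_toEuclideanCLM_eq hHk (gradient f xk - gradient f xstar)
  have hopt_star : 0 ≤ ⟪gradient f xstar, xt - xstar⟫ := by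
    have hd : HasGradientAt f (gradient f xstar) xstar :=
      ((hf.differentiable (by norm_num)) xstar).hasGradientAt
    have hm : IsMinOn f X xstar := fun z hz => hminstar z hz
    simpa using hm.localize.hasFDerivWithinAt_nonneg hd.hasFDerivAt.hasFDerivWithinAt
      (sub_mem_posTangentConeAt_of_segment_subset (hconv.segment_subset hxstar hxtX))
  have hopt_t := quadratic_first_order (inner_toEuclideanCLM_symm hHks) hconv hfhat hxtX hxtmin
    hxstar
  refine norm_sq_le_of_scaled_operators (inner_toEuclideanCLM_symm hHks)
    (inner_toEuclideanCLM_symm hGs) hμ hη hGμ hHG hGH hv hw ?_ ?_ ?_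
  · have h1 : xt - xk = (xt - xstar) - (xk - xstar) := by abel
    have h2 : xstar - xt = -(xt - xstar) := by abel
    rw [h1, h2, map_sub, inner_neg_right, inner_add_left, inner_sub_left,
      inner_toEuclideanCLM_symm hHks (xt - xstar)] at hopt_t
    rw [inner_sub_left _ _ (xt - xstar), inner_sub_left _ _ (xt - xstar)]
    linarith
  · refine norm_taylor_le hHess hconv (fun x hx y hy => ?_) hxk hxstar
    rw [← map_sub]
    exact hLip x hx y hy
  · refine inner_image_sub_le hHess hconv (fun x hx z => ?_) hxk hxstar
    rw [← hone]
    exact hle (hbound x hx).2 z
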